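/- arXiv:1304.7751 — 2 statements merged into one kernel-verified Lean document; each statement's English description precedes it below -/
import Mathlib

section
/- Let n ≥ m ≥ k ≥ 1 and p ≥ 1 be integers, and let B_1, …, B_p be m×n complex matrices each satisfying B_i B_i* = I_m. Then for every real ε > 0, the minimum over all k-element subsets s of {1,…,n} of (1/(n·p)) · ∑_{i=1}^{p} log det(ε·I_k + (B_i)_s* (B_i)_s) is at most (1/n)·log C(m,k) − (1/n)·log C(n,k) + 2√ε. -/
open Matrix Finset

/-- The `m × k` submatrix of an `m × n` matrix `B` consisting of the columns of `B`
indexed by the subset `s`. -/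
def colSubmatrix {m n : ℕ} (B : Matrix (Fin m) (Fin n) ℂ) (s : Finset (Fin n)) :
    Matrix (Fin m) {j // j ∈ s} ℂ :=
  Matrix.of fun i j => B i (j : Fin n)

/-!
The determinants of `ε • 1 + Bₛᴴ Bₛ` are the `k × k` principal minors of `ε • 1 + Bᴴ B`. Expanding
in `ε`, their sum is `∑ᵢ C(n - k + i, i) εⁱ e_{k-i}(Bᴴ B)`, where `e_j` is the sum of the `j × j`
principal minors, and `e_j(Bᴴ B) = e_j(B Bᴴ) ≤ C(m, j)` because `B Bᴴ ≤ 1`. Since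
`C(m, k - i) ≤ C(m, k) C(k, i)` and `εⁱ = √εⁱ √εⁱ`, the binomial theorem bounds this sum by
`C(m, k) (1 + √ε) ^ (n + k)`. By concavity of the logarithm, the average over `s` of the log
determinants of each matrix is at most the logarithm of the average determinant; averaging over
`s` after summing over the matrices then yields one `s` that serves all of them together.
-/

open scoped ComplexOrder MatrixOrder

theorem colSubmatrix_eq_submatrix {m n : ℕ} (B : Matrix (Fin m) (Fin n) ℂ) (s : Finset (Fin n)) :
    colSubmatrix B s = B.submatrix id Subtype.val :=
  rfl

section GramDeterminants

variable {m n R 𝕜 : Type*} [Fintype m] [DecidableEq n]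

theorem smul_one_add_gram_submatrix [NonAssocSemiring R] [StarRing R] {l : Type*} [DecidableEq l]
    (e : R) (B : Matrix m n R) {f : l → n} (hf : f.Injective) :
    e • 1 + (B.submatrix id f)ᴴ * B.submatrix id f = (e • 1 + Bᴴ * B).submatrix f f := by
  rw [conjTranspose_submatrix, ← submatrix_mul Bᴴ B f id f Function.bijective_id,
    ← submatrix_one f hf]
  rfl

variable [Fintype n]

theorem re_det_smul_one_add_gram_pos [RCLike 𝕜] {ε : ℝ} (hε : 0 < ε) (B : Matrix m n 𝕜) :
    0 < RCLike.re ((ε : 𝕜) • 1 + Bᴴ * B).det :=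
  (RCLike.pos_iff.mp ((PosDef.one.smul (by exact_mod_cast hε)).add_posSemidef
    (posSemidef_conjTranspose_mul_self B)).det_pos).1

variable [DecidableEq m]

section PrincipalMinors

variable [CommRing R]

/-- The sum of the `k × k` principal minors of `A`, that is, the `k`-th elementary symmetric
function of its eigenvalues. -/
def principalMinorSum (A : Matrix n n R) (k : ℕ) : R :=
  ∑ s ∈ univ.powersetCard k, (A.submatrix (Subtype.val : s → n) Subtype.val).det

theorem principalMinorSum_one (k : ℕ) :
    principalMinorSum (1 : Matrix n n R) k = (Fintype.card n).choose k := by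
  simp [principalMinorSum, submatrix_one _ Subtype.val_injective]

open Polynomial in
theorem principalMinorSum_mul_comm (A : Matrix m n R) (B : Matrix n m R) (k : ℕ) :
    principalMinorSum (A * B) k = principalMinorSum (B * A) k := by
  simp only [principalMinorSum, ← coeff_det_one_add_X_smul_eq_sum_minors, Matrix.map_mul]
  rw [← Matrix.smul_mul, det_one_add_mul_comm, Matrix.mul_smul]

theorem principalMinorSum_eq_charpoly_coeff (A : Matrix n n R) {k : ℕ}
    (hk : k ≤ Fintype.card n) :
    principalMinorSum A k = (-1) ^ k * A.charpoly.coeff (Fintype.card n - k) := by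
  rw [charpoly_coeff_eq_sum_minors A k hk, ← mul_assoc, ← mul_pow]
  simp [principalMinorSum]

open Polynomial in
theorem charpoly_smul_one_add (e : R) (A : Matrix n n R) :
    (e • 1 + A).charpoly = taylor (-e) A.charpoly := by
  rw [taylor_apply, ← charpoly_sub_scalar, map_neg, sub_neg_eq_add, add_comm, scalar_apply,
    smul_one_eq_diagonal]

open Polynomial in
theorem principalMinorSum_smul_one_add {k : ℕ} (hk : k ≤ Fintype.card n) (e : R)
    (A : Matrix n n R) :
    principalMinorSum (e • 1 + A) k =
      ∑ i ∈ range (k + 1),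
        ((Fintype.card n - k + i).choose i : R) * e ^ i * principalMinorSum A (k - i) := by
  nontriviality R
  set N := Fintype.card n
  have hdeg : (hasseDeriv (N - k) A.charpoly).natDegree < k + 1 := by
    have := natDegree_hasseDeriv_le A.charpoly (N - k)
    rw [charpoly_natDegree_eq_dim] at this
    omega
  rw [principalMinorSum_eq_charpoly_coeff _ hk, charpoly_smul_one_add, taylor_coeff,
    eval_eq_sum_range' hdeg, mul_sum]
  refine sum_congr rfl fun i hi => ?_
  obtain ⟨j, rfl⟩ := Nat.exists_eq_add_of_le (mem_range_succ_iff.mp hi)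
  have hsign : (-1 : R) ^ i * (-1) ^ i = 1 := by rw [← mul_pow]; simp
  rw [hasseDeriv_coeff, Nat.add_sub_cancel_left,
    principalMinorSum_eq_charpoly_coeff A (by omega), add_comm i (N - _),
    Nat.choose_symm_add, show N - (i + j) + i = N - j by omega, neg_pow e, pow_add]
  linear_combination
    ((N - j).choose i : R) * A.charpoly.coeff (N - j) * (-1) ^ j * e ^ i * hsign

end PrincipalMinors

section Contractions

variable [RCLike 𝕜]

theorem det_le_one_of_nonneg_of_le_one {A : Matrix n n 𝕜} (h₀ : 0 ≤ A) (h₁ : A ≤ 1) :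
    A.det ≤ 1 := by
  have hA : A.PosSemidef := nonneg_iff_posSemidef.mp h₀
  have hle (i : n) : hA.1.eigenvalues i ≤ 1 :=
    (CFC.le_one_iff A).mp h₁ _ (hA.1.eigenvalues_mem_spectrum_real i)
  rw [hA.1.det_eq_prod_eigenvalues]
  exact_mod_cast prod_le_one (fun i _ => hA.eigenvalues_nonneg i) fun i _ => hle i

theorem principalMinorSum_le_choose {A : Matrix n n 𝕜} (h₀ : 0 ≤ A) (h₁ : A ≤ 1) (k : ℕ) :
    principalMinorSum A k ≤ (Fintype.card n).choose k := by
  rw [← principalMinorSum_one (n := n) (R := 𝕜)]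
  refine sum_le_sum fun s _ => ?_
  rw [submatrix_one _ Subtype.val_injective, det_one]
  refine det_le_one_of_nonneg_of_le_one
    (nonneg_iff_posSemidef.mpr ((nonneg_iff_posSemidef.mp h₀).submatrix _)) ?_
  rw [le_iff, ← submatrix_one _ Subtype.val_injective]
  exact (le_iff.mp h₁).submatrix _

end Contractions

theorem choose_mul_choose_sub_le {n m k i : ℕ} (hik : i ≤ k) (hkm : k ≤ m) (hkn : k ≤ n) :
    (n - k + i).choose i * m.choose (k - i) ≤ m.choose k * (n.choose i * k.choose i) := by
  have hleft : (n - k + i).choose i ≤ n.choose i := Nat.choose_le_choose i (by omega)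
  have hright : m.choose (k - i) ≤ m.choose k * k.choose i := by
    rw [← Nat.choose_symm hik, Nat.choose_mul (Nat.sub_le k i)]
    exact Nat.le_mul_of_pos_right _ (Nat.choose_pos (by omega))
  exact (Nat.mul_le_mul hleft hright).trans_eq (by ring)

theorem sum_choose_mul_choose_sub_mul_sq_pow_le {n m k : ℕ} (hkm : k ≤ m) (hkn : k ≤ n)
    {x : ℝ} (hx : 0 ≤ x) :
    ∑ i ∈ range (k + 1), ((n - k + i).choose i : ℝ) * (x ^ 2) ^ i * m.choose (k - i) ≤
      m.choose k * (1 + x) ^ (n + k) := by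
  have hbinom (N : ℕ) : (1 + x) ^ N = ∑ i ∈ range (N + 1), N.choose i * x ^ i := by
    simp [add_comm 1 x, add_pow, mul_comm]
  have hterm {i : ℕ} (hi : i ∈ range (k + 1)) : k.choose i * x ^ i ≤ (1 + x) ^ k := by
    rw [hbinom]
    exact single_le_sum (f := fun i => k.choose i * x ^ i) (fun _ _ => by positivity) hi
  calc ∑ i ∈ range (k + 1), ((n - k + i).choose i : ℝ) * (x ^ 2) ^ i * m.choose (k - i)
      ≤ ∑ i ∈ range (k + 1), m.choose k * ((n.choose i * x ^ i) * (k.choose i * x ^ i)) := by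
        refine sum_le_sum fun i hi => ?_
        have h : ((n - k + i).choose i * m.choose (k - i) : ℝ) ≤
            m.choose k * (n.choose i * k.choose i) := by
          exact_mod_cast choose_mul_choose_sub_le (mem_range_succ_iff.mp hi) hkm hkn
        linear_combination (x ^ 2) ^ i * h
    _ ≤ ∑ i ∈ range (k + 1), m.choose k * ((n.choose i * x ^ i) * (1 + x) ^ k) := by
        gcongr with i hi
        exact hterm hi
    _ = m.choose k * ((∑ i ∈ range (k + 1), n.choose i * x ^ i) * (1 + x) ^ k) := by
        rw [sum_mul, mul_sum]
    _ ≤ m.choose k * ((1 + x) ^ n * (1 + x) ^ k) := by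
        rw [hbinom n]
        gcongr
    _ = m.choose k * (1 + x) ^ (n + k) := by rw [pow_add]

section RegularizedGram

variable [RCLike 𝕜]

theorem principalMinorSum_smul_one_add_conjTranspose_mul_self_le {k : ℕ}
    (hkm : k ≤ Fintype.card m) (hkn : k ≤ Fintype.card n) {B : Matrix m n 𝕜}
    (hB : B * Bᴴ ≤ 1) {ε : ℝ} (hε : 0 ≤ ε) :
    principalMinorSum ((ε : 𝕜) • 1 + Bᴴ * B) k ≤
      (((Fintype.card m).choose k * (1 + √ε) ^ (Fintype.card n + k) : ℝ) : 𝕜) := by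
  have hminors (j : ℕ) : principalMinorSum (Bᴴ * B) j ≤ (Fintype.card m).choose j := by
    rw [principalMinorSum_mul_comm]
    exact principalMinorSum_le_choose
      (nonneg_iff_posSemidef.mpr (posSemidef_self_mul_conjTranspose B)) hB j
  have : (0 : 𝕜) ≤ ε := by exact_mod_cast hε
  calc principalMinorSum ((ε : 𝕜) • 1 + Bᴴ * B) k
      = ∑ i ∈ range (k + 1), ((Fintype.card n - k + i).choose i : 𝕜) * (ε : 𝕜) ^ i *
          principalMinorSum (Bᴴ * B) (k - i) := principalMinorSum_smul_one_add hkn _ _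
    _ ≤ ∑ i ∈ range (k + 1), ((Fintype.card n - k + i).choose i : 𝕜) * (ε : 𝕜) ^ i *
          (Fintype.card m).choose (k - i) := by
        gcongr with i
        exact hminors (k - i)
    _ = ((∑ i ∈ range (k + 1), ((Fintype.card n - k + i).choose i : ℝ) * (√ε ^ 2) ^ i *
          (Fintype.card m).choose (k - i) : ℝ) : 𝕜) := by
        rw [Real.sq_sqrt hε]
        push_cast
        rfl
    _ ≤ _ := by exact_mod_cast sum_choose_mul_choose_sub_mul_sq_pow_le hkm hkn (Real.sqrt_nonneg ε)

theorem log_average_det_gram_submatrix_le {k : ℕ} (hkm : k ≤ Fintype.card m)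
    (hkn : k ≤ Fintype.card n) {B : Matrix m n 𝕜} (hB : B * Bᴴ ≤ 1) {ε : ℝ} (hε : 0 < ε) :
    Real.log ((∑ s ∈ univ.powersetCard k, RCLike.re ((ε : 𝕜) • 1 +
        (B.submatrix id (Subtype.val : s → n))ᴴ * B.submatrix id Subtype.val).det) /
          (Fintype.card n).choose k) ≤
      Real.log ((Fintype.card m).choose k) - Real.log ((Fintype.card n).choose k) +
        2 * Fintype.card n * √ε := by
  have hM : 0 < ((Fintype.card m).choose k : ℝ) := by exact_mod_cast Nat.choose_pos hkm
  have hN : 0 < ((Fintype.card n).choose k : ℝ) := by exact_mod_cast Nat.choose_pos hkn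
  set S := ∑ s ∈ univ.powersetCard k, RCLike.re ((ε : 𝕜) • 1 +
    (B.submatrix id (Subtype.val : s → n))ᴴ * B.submatrix id Subtype.val).det with hS
  have hS_pos : 0 < S := sum_pos (fun s _ => re_det_smul_one_add_gram_pos hε _)
    (powersetCard_nonempty.mpr hkn)
  have hS_le : S ≤ (Fintype.card m).choose k * (1 + √ε) ^ (Fintype.card n + k) := by
    simpa only [hS, smul_one_add_gram_submatrix _ _ Subtype.val_injective, principalMinorSum,
      map_sum, RCLike.ofReal_re] using RCLike.re_monotone
        (principalMinorSum_smul_one_add_conjTranspose_mul_self_le hkm hkn hB hε.le)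
  have hroot : 1 ≤ 1 + √ε := le_add_of_nonneg_right (Real.sqrt_nonneg ε)
  have hpow : (Fintype.card n + k : ℕ) * Real.log (1 + √ε) ≤ 2 * Fintype.card n * √ε := by
    refine mul_le_mul ?_ ?_ (Real.log_nonneg hroot) (by positivity)
    · exact_mod_cast (by omega : Fintype.card n + k ≤ 2 * Fintype.card n)
    · linarith [Real.log_le_sub_one_of_pos (zero_lt_one.trans_le hroot)]
  calc Real.log (S / (Fintype.card n).choose k)
      = Real.log S - Real.log ((Fintype.card n).choose k) := Real.log_div hS_pos.ne' hN.ne'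
    _ ≤ Real.log ((Fintype.card m).choose k * (1 + √ε) ^ (Fintype.card n + k)) -
          Real.log ((Fintype.card n).choose k) := by gcongr
    _ = Real.log ((Fintype.card m).choose k) + (Fintype.card n + k : ℕ) * Real.log (1 + √ε) -
          Real.log ((Fintype.card n).choose k) := by
        rw [Real.log_mul hM.ne' (by positivity), Real.log_pow]
    _ ≤ _ := by linarith

end RegularizedGram

theorem sum_log_le_card_mul_log_average {α : Type*} {t : Finset α} {f : α → ℝ}
    (hf : ∀ a ∈ t, 0 < f a) :
    ∑ a ∈ t, Real.log (f a) ≤ #t * Real.log ((∑ a ∈ t, f a) / #t) := by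
  rcases t.eq_empty_or_nonempty with rfl | ht
  · simp
  have hjensen := strictConcaveOn_log_Ioi.concaveOn.le_map_sum (t := t)
    (w := fun _ => (#t : ℝ)⁻¹) (p := f) (fun _ _ => by positivity)
    (by simp [ht.card_ne_zero]) hf
  simp only [smul_eq_mul, ← mul_sum] at hjensen
  rwa [inv_mul_le_iff₀ (by exact_mod_cast ht.card_pos), ← div_eq_inv_mul] at hjensen

theorem exists_sum_log_le_sum_log_average {α ι : Type*} [Fintype ι] {t : Finset α}
    (ht : t.Nonempty) {f : ι → α → ℝ} (hf : ∀ i, ∀ a ∈ t, 0 < f i a) :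
    ∃ a ∈ t, ∑ i, Real.log (f i a) ≤ ∑ i, Real.log ((∑ a ∈ t, f i a) / #t) := by
  refine exists_le_of_sum_le ht ?_
  rw [sum_comm, sum_const, nsmul_eq_mul, mul_sum]
  exact sum_le_sum fun i _ => sum_log_le_card_mul_log_average (hf i)

theorem min_avg_log_det_le_general {ι : Type*} [Fintype ι] [Nonempty ι] [Nonempty n] [RCLike 𝕜]
    {k : ℕ} (hkm : k ≤ Fintype.card m) (hkn : k ≤ Fintype.card n)
    (B : ι → Matrix m n 𝕜) (hB : ∀ i, B i * (B i)ᴴ ≤ 1) {ε : ℝ} (hε : 0 < ε) :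
    (univ.powersetCard k).inf' (powersetCard_nonempty.mpr hkn)
        (fun s : Finset n => (1 / ((Fintype.card n : ℝ) * Fintype.card ι)) * ∑ i,
          Real.log (RCLike.re ((ε : 𝕜) • 1 + ((B i).submatrix id (Subtype.val : s → n))ᴴ *
            (B i).submatrix id Subtype.val).det))
      ≤ (1 / (Fintype.card n : ℝ)) * Real.log ((Fintype.card m).choose k)
        - (1 / (Fintype.card n : ℝ)) * Real.log ((Fintype.card n).choose k) + 2 * √ε := by
  obtain ⟨s, hs, hle⟩ := exists_sum_log_le_sum_log_average (powersetCard_nonempty.mpr hkn)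
    fun i s _ => re_det_smul_one_add_gram_pos hε ((B i).submatrix id (Subtype.val : s → n))
  rw [card_powersetCard, card_univ] at hle
  have hbound := hle.trans
    (sum_le_card_nsmul _ _ _ fun i _ => log_average_det_gram_submatrix_le hkm hkn (hB i) hε)
  refine (inf'_le _ hs).trans ((mul_le_mul_of_nonneg_left hbound (by positivity)).trans_eq ?_)
  rw [card_univ, nsmul_eq_mul]
  field_simp

end GramDeterminants

/-- Let `n ≥ m ≥ k ≥ 1`, `p ≥ 1`, and let `B₁, …, B_p` be `m × n`
complex matrices each satisfying `Bᵢ Bᵢᴴ = I`.  Then for every `ε > 0` the minimum over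
all `k`-element column subsets `s` of
`(1/(n·p)) ∑ᵢ log det (ε • I + (Bᵢ)ₛᴴ (Bᵢ)ₛ)` is at most
`(1/n) log C(m,k) − (1/n) log C(n,k) + 2√ε`. -/
theorem min_avg_log_det_le
    (n m k p : ℕ) (hk : 1 ≤ k) (hkm : k ≤ m) (hmn : m ≤ n) (hp : 1 ≤ p)
    (B : Fin p → Matrix (Fin m) (Fin n) ℂ) (hB : ∀ i, B i * (B i)ᴴ = 1)
    (ε : ℝ) (hε : 0 < ε) :
    (Finset.univ.powersetCard k).inf'
        (Finset.powersetCard_nonempty.mpr (by simpa using hkm.trans hmn))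
        (fun s => (1 / ((n : ℝ) * p)) * ∑ i : Fin p,
          Real.log (((ε : ℂ) • 1 +
            (colSubmatrix (B i) s)ᴴ * colSubmatrix (B i) s).det.re))
      ≤ (1 / (n : ℝ)) * Real.log (m.choose k) - (1 / (n : ℝ)) * Real.log (n.choose k)
        + 2 * Real.sqrt ε := by
  have : Nonempty (Fin p) := ⟨0, hp⟩
  have : Nonempty (Fin n) := ⟨0, hk.trans (hkm.trans hmn)⟩
  simpa only [Fintype.card_fin, colSubmatrix_eq_submatrix, RCLike.re_eq_complex_re,
    RCLike.ofReal_eq_complex_ofReal] using min_avg_log_det_le_general (by simpa using hkm)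
    (by simpa using hkm.trans hmn) B (fun i => (hB i).le) hε
end

section
/- Let n ≥ m ≥ k ≥ 1 and p ≥ 1 be integers, set α := m/n and β := k/n, and let B_1, …, B_p be m×n complex matrices each satisfying B_i B_i* = I_m. Then for every real ε > 0, the minimum over all k-element subsets s of {1,…,n} of (1/(n·p)) · ∑_{i=1}^{p} log det(ε·I_k + (B_i)_s* (B_i)_s) is at most α·H(β/α) − H(β) + 2√ε + log(n+1)/n. -/
open Matrix Finset

/-- Binary entropy function `H(x) = -x log x - (1-x) log (1-x)`
(with `H 0 = H 1 = 0`, since `Real.log 0 = 0`). -/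
noncomputable def binEntropy (x : ℝ) : ℝ :=
  -x * Real.log x - (1 - x) * Real.log (1 - x)

/-! Average over all `k`-subsets `s` instead of minimising. The sum of the `k × k` principal minors
of `y + Bᴴ B` is the coefficient of `X ^ k` in `det (1 + X (y + Bᴴ B))`, which the identity
`B Bᴴ = 1` evaluates to `(1 + y X) ^ (n - m) * (1 + (1 + y) X) ^ m`: it is the same for all `B`.
At `y = ε` this coefficient is at most `C(m, k) (1 + √ε) ^ (2 n)`, so by concavity of `log` the
average of `log det` is at most `log (C(m, k) / C(n, k)) + 2 n √ε` for every `B_i`, hence also for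
their mean, and some `s` is no worse than the average. The binomial coefficients become entropies
because `exp (n H(k / n))` exceeds `C(n, k)` by a factor between `1` and `n + 1`.
-/

section PrincipalMinors

open Polynomial

theorem coeff_one_add_C_mul_X_pow {S : Type*} [CommSemiring S] (r : S) (n k : ℕ) :
    ((1 + C r * X : S[X]) ^ n).coeff k = n.choose k * r ^ k := by
  rw [← coeff_one_add_X_pow, ← comp_C_mul_X_coeff]
  simp only [pow_comp, add_comp, one_comp, X_comp]

variable {ι κ R : Type*} [Fintype ι] [DecidableEq ι] [Fintype κ] [DecidableEq κ] [CommRing R]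

theorem eval_charpoly_neg (M : Matrix ι ι R) (a : R) :
    (-M).charpoly.eval a = (a • (1 : Matrix ι ι R) + M).det := by
  rw [eval_charpoly, sub_neg_eq_add, scalar_apply, ← smul_one_eq_diagonal]

theorem det_smul_one_add_smul_mul_of_mul_eq_one {A : Matrix κ ι R} {B : Matrix ι κ R}
    (h : A * B = 1) (hcard : Fintype.card κ ≤ Fintype.card ι) (a b : R) :
    (a • (1 : Matrix ι ι R) + b • (B * A)).det =
      a ^ (Fintype.card ι - Fintype.card κ) * (a + b) ^ Fintype.card κ := by
  calc (a • (1 : Matrix ι ι R) + b • (B * A)).det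
      = (B * -(b • A)).charpoly.eval a := by
        rw [← eval_charpoly_neg, Matrix.mul_neg, Matrix.mul_smul]
    _ = a ^ (Fintype.card ι - Fintype.card κ) * (-(b • (A * B))).charpoly.eval a := by
        rw [charpoly_mul_comm_of_le _ _ hcard, eval_mul, eval_pow, eval_X, Matrix.neg_mul,
          Matrix.smul_mul]
    _ = a ^ (Fintype.card ι - Fintype.card κ) * (a + b) ^ Fintype.card κ := by
        rw [eval_charpoly_neg, h, ← add_smul, det_smul, det_one, mul_one]

theorem sum_det_submatrix_smul_one_add_mul {A : Matrix κ ι R} {B : Matrix ι κ R}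
    (h : A * B = 1) (hcard : Fintype.card κ ≤ Fintype.card ι) (y : R) (k : ℕ) :
    ∑ s ∈ univ.powersetCard k,
        ((y • (1 : Matrix ι ι R) + B * A).submatrix (Subtype.val : s → ι) Subtype.val).det =
      ∑ ij ∈ antidiagonal k, ((Fintype.card ι - Fintype.card κ).choose ij.1 * y ^ ij.1) *
        ((Fintype.card κ).choose ij.2 * (1 + y) ^ ij.2) := by
  have hC : A.map C * B.map C = 1 := by
    rw [← Matrix.map_mul, h, Matrix.map_one _ C.map_zero C.map_one]
  have hpencil : 1 + (X : R[X]) • (y • (1 : Matrix ι ι R) + B * A).map C =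
      (1 + C y * X) • (1 : Matrix ι ι R[X]) + (X : R[X]) • (B.map C * A.map C) := by
    rw [Matrix.map_add _ C.map_add, Matrix.map_mul, Matrix.map_smul' _ _ _ C.map_mul,
      Matrix.map_one _ C.map_zero C.map_one, smul_add, smul_smul, add_smul, one_smul, mul_comm X,
      add_assoc]
  rw [← coeff_det_one_add_X_smul_eq_sum_minors, hpencil,
    det_smul_one_add_smul_mul_of_mul_eq_one hC hcard,
    show 1 + C y * X + X = 1 + C (1 + y) * X by rw [C_add, C_1]; ring, coeff_mul]
  simp only [coeff_one_add_C_mul_X_pow]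

end PrincipalMinors

section Binomial

theorem choose_mul_pow_le_one_add_pow {R : Type*} [CommSemiring R] [PartialOrder R]
    [IsStrictOrderedRing R] {x : R} (hx : 0 ≤ x) (n i : ℕ) :
    n.choose i * x ^ i ≤ (1 + x) ^ n := by
  rcases le_or_gt i n with hi | hi
  · rw [add_comm, add_pow]
    simpa only [one_pow, mul_one, mul_comm] using
      single_le_sum (f := fun j => x ^ j * 1 ^ (n - j) * (n.choose j : R))
        (fun _ _ => by positivity) (mem_range_succ_iff.mpr hi)
  · rw [Nat.choose_eq_zero_of_lt hi, Nat.cast_zero, zero_mul]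
    positivity

theorem choose_le_choose_mul_choose {m k : ℕ} (hkm : k ≤ m) {j : ℕ} (hjk : j ≤ k) :
    m.choose j ≤ m.choose k * k.choose j := by
  rw [Nat.choose_mul hjk]
  exact Nat.le_mul_of_pos_right _ (Nat.choose_pos (Nat.sub_le_sub_right hkm j))

theorem sum_antidiagonal_choose_mul_choose_le {n m k : ℕ} (hkm : k ≤ m) (hmn : m ≤ n) {ε : ℝ}
    (hε : 0 ≤ ε) :
    ∑ ij ∈ antidiagonal k,
        ((n - m).choose ij.1 * ε ^ ij.1) * (m.choose ij.2 * (1 + ε) ^ ij.2) ≤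
      m.choose k * (1 + √ε) ^ (2 * n) := by
  have hsq : √ε * √ε = ε := Real.mul_self_sqrt hε
  have term_le (ij : ℕ × ℕ) (hij : ij ∈ antidiagonal k) :
      ((n - m).choose ij.1 * ε ^ ij.1) * (m.choose ij.2 * (1 + ε) ^ ij.2) ≤
        (1 + √ε) ^ (n - m) * m.choose k *
          (k.choose ij.1 • (√ε ^ ij.1 * (1 + ε) ^ ij.2)) := by
    have hchoose : (m.choose ij.2 : ℝ) ≤ m.choose k * k.choose ij.1 := by
      rw [Nat.choose_symm_of_eq_add (mem_antidiagonal.mp hij).symm]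
      exact_mod_cast choose_le_choose_mul_choose hkm (by have := mem_antidiagonal.mp hij; omega)
    -- One factor `√ε ^ i` absorbs `C(n - m, i)`; the other is kept for the binomial expansion
    -- of `(√ε + (1 + ε)) ^ k`.
    calc _ = ((n - m).choose ij.1 * √ε ^ ij.1) *
            (m.choose ij.2 * (√ε ^ ij.1 * (1 + ε) ^ ij.2)) := by
          nth_rw 1 [← hsq]
          ring
      _ ≤ (1 + √ε) ^ (n - m) *
            (m.choose k * k.choose ij.1 * (√ε ^ ij.1 * (1 + ε) ^ ij.2)) := by
          gcongr
          exact choose_mul_pow_le_one_add_pow (Real.sqrt_nonneg ε) _ _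
      _ = _ := by rw [nsmul_eq_mul]; ring
  calc _ ≤ (1 + √ε) ^ (n - m) * m.choose k * (√ε + (1 + ε)) ^ k := by
        rw [(Commute.all (√ε) (1 + ε)).add_pow', mul_sum]
        exact sum_le_sum term_le
    _ ≤ (1 + √ε) ^ (n - m) * m.choose k * ((1 + √ε) ^ 2) ^ k := by
        gcongr
        nlinarith [Real.sqrt_nonneg ε]
    _ = m.choose k * (1 + √ε) ^ (n - m + 2 * k) := by
        rw [← pow_mul, pow_add]
        ring
    _ ≤ m.choose k * (1 + √ε) ^ (2 * n) := by
        gcongr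
        · exact le_add_of_nonneg_right (Real.sqrt_nonneg ε)
        · omega

end Binomial

section Entropy

theorem factorial_mul_pow_le (a b : ℕ) : a.factorial * a ^ b ≤ b.factorial * a ^ a := by
  rcases le_total a b with h | h
  · calc a.factorial * a ^ b = a.factorial * a ^ (b - a) * a ^ a := by
          rw [mul_assoc, ← pow_add, Nat.sub_add_cancel h]
      _ ≤ b.factorial * a ^ a :=
          Nat.mul_le_mul_right _ (Nat.factorial_mul_pow_sub_le_factorial h)
  · calc a.factorial * a ^ b = b.factorial * a.descFactorial (a - b) * a ^ b := by
          rw [← Nat.factorial_mul_descFactorial (Nat.sub_le a b), Nat.sub_sub_self h]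
      _ ≤ b.factorial * a ^ (a - b) * a ^ b := by
          gcongr
          exact Nat.descFactorial_le_pow a _
      _ = b.factorial * a ^ a := by rw [mul_assoc, ← pow_add, Nat.sub_add_cancel h]

/-- The mode of the binomial distribution with parameters `n` and `k / n` is `k`. -/
theorem choose_mul_pow_mul_pow_le {n k j : ℕ} (hk : k ≤ n) (hj : j ≤ n) :
    n.choose j * (k ^ j * (n - k) ^ (n - j)) ≤ n.choose k * (k ^ k * (n - k) ^ (n - k)) := by
  refine Nat.le_of_mul_le_mul_left (c := k.factorial * (n - k).factorial) ?_ (by positivity)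
  calc k.factorial * (n - k).factorial * (n.choose j * (k ^ j * (n - k) ^ (n - j)))
      = n.choose j * (k.factorial * k ^ j * ((n - k).factorial * (n - k) ^ (n - j))) := by ring
    _ ≤ n.choose j * (j.factorial * k ^ k * ((n - j).factorial * (n - k) ^ (n - k))) :=
        Nat.mul_le_mul_left _
          (Nat.mul_le_mul (factorial_mul_pow_le k j) (factorial_mul_pow_le (n - k) (n - j)))
    _ = (n.choose j * j.factorial * (n - j).factorial) * (k ^ k * (n - k) ^ (n - k)) := by ring
    _ = (n.choose k * k.factorial * (n - k).factorial) * (k ^ k * (n - k) ^ (n - k)) := by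
        rw [Nat.choose_mul_factorial_mul_factorial hj, Nat.choose_mul_factorial_mul_factorial hk]
    _ = k.factorial * (n - k).factorial * (n.choose k * (k ^ k * (n - k) ^ (n - k))) := by ring

theorem pow_self_eq_sum_choose_mul_pow_mul_pow {n k : ℕ} (hk : k ≤ n) :
    n ^ n = ∑ j ∈ range (n + 1), n.choose j * (k ^ j * (n - k) ^ (n - j)) := by
  have h := add_pow k (n - k) n
  rw [Nat.add_sub_cancel' hk] at h
  simpa only [Nat.cast_id, mul_comm (n.choose _)] using h

theorem choose_mul_pow_mul_pow_le_pow_self {n k : ℕ} (hk : k ≤ n) :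
    n.choose k * (k ^ k * (n - k) ^ (n - k)) ≤ n ^ n := by
  rw [pow_self_eq_sum_choose_mul_pow_mul_pow hk]
  exact single_le_sum (f := fun j => n.choose j * (k ^ j * (n - k) ^ (n - j)))
    (fun _ _ => Nat.zero_le _) (mem_range_succ_iff.mpr hk)

theorem pow_self_le_succ_mul_choose_mul_pow_mul_pow {n k : ℕ} (hk : k ≤ n) :
    n ^ n ≤ (n + 1) * (n.choose k * (k ^ k * (n - k) ^ (n - k))) := by
  rw [pow_self_eq_sum_choose_mul_pow_mul_pow hk]
  simpa only [card_range, smul_eq_mul] using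
    sum_le_card_nsmul (range (n + 1)) _ _ fun j hj =>
      choose_mul_pow_mul_pow_le hk (mem_range_succ_iff.mp hj)

theorem mul_binEntropy_div {n k : ℕ} (hn : n ≠ 0) (hk : k ≤ n) :
    n * binEntropy (k / n) =
      Real.log (n ^ n : ℕ) - Real.log (k ^ k * (n - k) ^ (n - k) : ℕ) := by
  have log_pow_self (a : ℕ) : Real.log (a ^ a : ℕ) = a * Real.log a := by
    rw [Nat.cast_pow, Real.log_pow]
  have mul_log_div (a : ℕ) : (a : ℝ) * Real.log (a / n) = a * Real.log a - a * Real.log n := by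
    rcases eq_or_ne a 0 with rfl | ha
    · simp
    · rw [Real.log_div (by positivity) (by positivity), mul_sub]
  have pow_self_ne (a : ℕ) : ((a ^ a : ℕ) : ℝ) ≠ 0 := by exact_mod_cast Nat.pow_self_pos.ne'
  have hsub : 1 - (k : ℝ) / n = (n - k : ℕ) / n := by
    rw [Nat.cast_sub hk]
    field_simp
  calc n * binEntropy (k / n)
      = -(k * Real.log (k / n)) - (n - k : ℕ) * Real.log ((n - k : ℕ) / n) := by
        rw [binEntropy, hsub]
        field_simp
    _ = n * Real.log n - (k * Real.log k + (n - k : ℕ) * Real.log (n - k : ℕ)) := by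
        rw [mul_log_div, mul_log_div, Nat.cast_sub hk]
        ring
    _ = _ := by
        rw [Nat.cast_mul, Real.log_mul (pow_self_ne k) (pow_self_ne (n - k)), log_pow_self,
          log_pow_self, log_pow_self]

theorem log_choose_le_mul_binEntropy {n k : ℕ} (hn : n ≠ 0) (hk : k ≤ n) :
    Real.log (n.choose k) ≤ n * binEntropy (k / n) := by
  have hpow : 0 < k ^ k * (n - k) ^ (n - k) := Nat.mul_pos Nat.pow_self_pos Nat.pow_self_pos
  have hchoose : 0 < n.choose k := Nat.choose_pos hk
  rw [mul_binEntropy_div hn hk, le_sub_iff_add_le, ← Real.log_mul (by positivity) (by positivity)]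
  exact Real.log_le_log (by positivity) (by exact_mod_cast choose_mul_pow_mul_pow_le_pow_self hk)

theorem mul_binEntropy_le_log_choose_add_log {n k : ℕ} (hn : n ≠ 0) (hk : k ≤ n) :
    n * binEntropy (k / n) ≤ Real.log (n.choose k) + Real.log (n + 1) := by
  have hpow : 0 < k ^ k * (n - k) ^ (n - k) := Nat.mul_pos Nat.pow_self_pos Nat.pow_self_pos
  have hchoose : 0 < n.choose k := Nat.choose_pos hk
  rw [mul_binEntropy_div hn hk, sub_le_iff_le_add, add_comm (Real.log _) (Real.log (n + 1)),
    ← Real.log_mul (by positivity) (by positivity), ← Real.log_mul (by positivity) (by positivity),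
    mul_assoc]
  exact Real.log_le_log (by positivity)
    (by exact_mod_cast pow_self_le_succ_mul_choose_mul_pow_mul_pow hk)

theorem log_choose_div_choose_le {n m k : ℕ} (hm : m ≠ 0) (hkm : k ≤ m) (hmn : m ≤ n) :
    Real.log (m.choose k / n.choose k) ≤
      m * binEntropy (k / m) - n * binEntropy (k / n) + Real.log (n + 1) := by
  have hmk : m.choose k ≠ 0 := (Nat.choose_pos hkm).ne'
  have hnk : n.choose k ≠ 0 := (Nat.choose_pos (hkm.trans hmn)).ne'
  rw [Real.log_div (by exact_mod_cast hmk) (by exact_mod_cast hnk)]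
  linarith [log_choose_le_mul_binEntropy hm hkm,
    mul_binEntropy_le_log_choose_add_log (by omega : n ≠ 0) (hkm.trans hmn)]

end Entropy

section Averaging

variable {ι σ : Type*}

theorem sum_log_le_card_mul_log {S : Finset σ} (hS : S.Nonempty) {d : σ → ℝ} {c : ℝ}
    (hd : ∀ s ∈ S, 0 < d s) (hc : ∑ s ∈ S, d s ≤ #S * c) :
    ∑ s ∈ S, Real.log (d s) ≤ #S * Real.log c := by
  have hcard : (0 : ℝ) < #S := by exact_mod_cast hS.card_pos
  have hjensen := strictConcaveOn_log_Ioi.concaveOn.le_map_sum (t := S) (w := fun _ => (#S : ℝ)⁻¹)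
    (p := d) (fun _ _ => by positivity)
    (by rw [sum_const, nsmul_eq_mul, mul_inv_cancel₀ hcard.ne']) hd
  simp only [smul_eq_mul, ← mul_sum] at hjensen
  rw [← inv_mul_le_iff₀ hcard]
  refine hjensen.trans (Real.log_le_log ?_ ((inv_mul_le_iff₀ hcard).mpr hc))
  exact mul_pos (inv_pos.mpr hcard) (sum_pos hd hS)

theorem exists_sum_log_le_card_mul_log {S : Finset σ} (hS : S.Nonempty) (T : Finset ι)
    {d : ι → σ → ℝ} {c : ℝ} (hd : ∀ i ∈ T, ∀ s ∈ S, 0 < d i s)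
    (hc : ∀ i ∈ T, ∑ s ∈ S, d i s ≤ #S * c) :
    ∃ s ∈ S, ∑ i ∈ T, Real.log (d i s) ≤ #T * Real.log c := by
  refine exists_le_of_sum_le hS ?_
  calc ∑ s ∈ S, ∑ i ∈ T, Real.log (d i s) = ∑ i ∈ T, ∑ s ∈ S, Real.log (d i s) := sum_comm
    _ ≤ ∑ _i ∈ T, #S * Real.log c :=
        sum_le_sum fun i hi => sum_log_le_card_mul_log hS (hd i hi) (hc i hi)
    _ = ∑ _s ∈ S, #T * Real.log c := by
        simp only [sum_const, nsmul_eq_mul]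
        ring

end Averaging

section Gram

variable {m n : ℕ}

theorem smul_one_add_gram_colSubmatrix (B : Matrix (Fin m) (Fin n) ℂ) (s : Finset (Fin n))
    (y : ℂ) :
    y • 1 + (colSubmatrix B s)ᴴ * colSubmatrix B s =
      (y • (1 : Matrix (Fin n) (Fin n) ℂ) + Bᴴ * B).submatrix
        (Subtype.val : s → Fin n) Subtype.val := by
  rw [← submatrix_one (Subtype.val : s → Fin n) Subtype.val_injective]
  rfl

open scoped ComplexOrder in
theorem re_det_smul_one_add_gram_pos_s3 {ι κ : Type*} [Fintype ι] [Fintype κ] [DecidableEq κ]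
    (A : Matrix ι κ ℂ) {ε : ℝ} (hε : 0 < ε) : 0 < ((ε : ℂ) • 1 + Aᴴ * A).det.re := by
  have h : ((ε : ℂ) • 1 + Aᴴ * A).PosDef :=
    (PosDef.one.smul (by exact_mod_cast hε)).add_posSemidef (posSemidef_conjTranspose_mul_self A)
  exact (Complex.pos_iff.mp h.det_pos).1

theorem sum_re_det_smul_one_add_gram_le {k : ℕ} (hkm : k ≤ m) (hmn : m ≤ n)
    {B : Matrix (Fin m) (Fin n) ℂ} (hB : B * Bᴴ = 1) {ε : ℝ} (hε : 0 ≤ ε) :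
    ∑ s ∈ univ.powersetCard k,
        ((ε : ℂ) • 1 + (colSubmatrix B s)ᴴ * colSubmatrix B s).det.re ≤
      m.choose k * (1 + √ε) ^ (2 * n) := by
  refine le_of_eq_of_le ?_ (sum_antidiagonal_choose_mul_choose_le hkm hmn hε)
  simp only [← Complex.re_sum, smul_one_add_gram_colSubmatrix]
  rw [sum_det_submatrix_smul_one_add_mul hB (by simpa only [Fintype.card_fin] using hmn)]
  simp only [Fintype.card_fin]
  exact_mod_cast Complex.ofReal_re _

theorem exists_sum_log_det_le {ι : Type*} [Fintype ι] {k : ℕ} (hkm : k ≤ m) (hmn : m ≤ n)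
    {B : ι → Matrix (Fin m) (Fin n) ℂ} (hB : ∀ i, B i * (B i)ᴴ = 1) {ε : ℝ} (hε : 0 < ε) :
    ∃ s ∈ univ.powersetCard k,
      ∑ i, Real.log ((ε : ℂ) • 1 + (colSubmatrix (B i) s)ᴴ * colSubmatrix (B i) s).det.re ≤
        Fintype.card ι * (Real.log (m.choose k / n.choose k) + 2 * n * √ε) := by
  have hmk : (0 : ℝ) < m.choose k := by exact_mod_cast Nat.choose_pos hkm
  have hnk : (0 : ℝ) < n.choose k := by exact_mod_cast Nat.choose_pos (hkm.trans hmn)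
  have hlog : Real.log (m.choose k / n.choose k * (1 + √ε) ^ (2 * n)) ≤
      Real.log (m.choose k / n.choose k) + 2 * n * √ε := by
    rw [Real.log_mul (by positivity) (by positivity), Real.log_pow]
    push_cast
    gcongr
    linarith [Real.log_le_sub_one_of_pos (show 0 < 1 + √ε by positivity)]
  obtain ⟨s, hs, hle⟩ := exists_sum_log_le_card_mul_log
    (S := (univ : Finset (Fin n)).powersetCard k)
    (powersetCard_nonempty.mpr (by simpa using hkm.trans hmn)) univ
    (d := fun i s => ((ε : ℂ) • 1 + (colSubmatrix (B i) s)ᴴ * colSubmatrix (B i) s).det.re)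
    (c := m.choose k / n.choose k * (1 + √ε) ^ (2 * n))
    (fun i _ s _ => re_det_smul_one_add_gram_pos_s3 (colSubmatrix (B i) s) hε)
    fun i _ => (sum_re_det_smul_one_add_gram_le hkm hmn (hB i) hε.le).trans_eq (by
      rw [card_powersetCard, card_univ, Fintype.card_fin, ← mul_assoc,
        mul_div_cancel₀ _ hnk.ne'])
  exact ⟨s, hs, hle.trans (by rw [card_univ]; gcongr)⟩

end Gram

/-- Let `n ≥ m ≥ k ≥ 1`, `p ≥ 1`, `α := m/n`, `β := k/n`, and let
`B₁, …, B_p` be `m × n` complex matrices each satisfying `Bᵢ Bᵢᴴ = I`.  Then for every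
`ε > 0` the minimum over all `k`-element column subsets `s` of
`(1/(n·p)) ∑ᵢ log det (ε • I + (Bᵢ)ₛᴴ (Bᵢ)ₛ)` is at most
`α H(β/α) − H(β) + 2√ε + log(n+1)/n`. -/
theorem min_avg_log_det_le_entropy
    (n m k p : ℕ) (hk : 1 ≤ k) (hkm : k ≤ m) (hmn : m ≤ n) (hp : 1 ≤ p)
    (α β : ℝ) (hα : α = (m : ℝ) / n) (hβ : β = (k : ℝ) / n)
    (B : Fin p → Matrix (Fin m) (Fin n) ℂ) (hB : ∀ i, B i * (B i)ᴴ = 1)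
    (ε : ℝ) (hε : 0 < ε) :
    (Finset.univ.powersetCard k).inf'
        (Finset.powersetCard_nonempty.mpr (by simpa using hkm.trans hmn))
        (fun s => (1 / ((n : ℝ) * p)) * ∑ i : Fin p,
          Real.log (((ε : ℂ) • 1 +
            (colSubmatrix (B i) s)ᴴ * colSubmatrix (B i) s).det.re))
      ≤ α * binEntropy (β / α) - binEntropy β + 2 * Real.sqrt ε
        + Real.log (n + 1) / n := by
  subst hα hβ
  have hm : m ≠ 0 := Nat.ne_of_gt (hk.trans hkm)
  have hn : (0 : ℝ) < n := by exact_mod_cast (hk.trans hkm).trans hmn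
  have hp' : (p : ℝ) ≠ 0 := by positivity
  obtain ⟨s, hs, hle⟩ := exists_sum_log_det_le hkm hmn hB hε
  refine (inf'_le _ hs).trans ?_
  calc _ ≤ 1 / ((n : ℝ) * p) * (p * (Real.log (m.choose k / n.choose k) + 2 * n * √ε)) := by
        gcongr
        simpa only [Fintype.card_fin] using hle
    _ = (Real.log (m.choose k / n.choose k) + 2 * n * √ε) / n := by field_simp
    _ ≤ (m * binEntropy (k / m) - n * binEntropy (k / n) + Real.log (n + 1) + 2 * n * √ε) / n := by
        gcongr
        exact log_choose_div_choose_le hm hkm hmn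
    _ = _ := by
        rw [div_div_div_cancel_right₀ hn.ne']
        field_simp
        ring
end
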